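/- Let Q be a Lie point characteristic generating divergence variational symmetries of the difference Lagrangian L, i.e. pr v(L) = Div R identically for some p-tuple R of difference functions depending only on forward values. Then for the Noether conservation law components P^i = T^i(L) − R^i one has, for every i ∈ {1,…,p} and all n and u: (pr v(P^i))(n,u) = (T^i(Div R))(n,u) − (pr v(R^i))(n,u). -/

import Mathlib

open scoped Classical

/-- Multi-indices / lattice points of the lattice `ℤ^p`. -/
abbrev Idx (p : ℕ) : Type := Fin p → ℤ

/-- Fields `u : ℤ^p → ℝ^q`. -/
abbrev Fld (p q : ℕ) : Type := Idx p → Fin q → ℝ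

/-- Difference functions (raw): functions of a lattice point and a field. -/
abbrev DFun (p q : ℕ) : Type := Idx p → Fld p q → ℝ

/-- Replace the value `u^α(m)` of the field `u` by `t`. -/
noncomputable def upd {p q : ℕ} (u : Fld p q) (m : Idx p) (α : Fin q) (t : ℝ) : Fld p q :=
  fun m' β => if m' = m ∧ β = α then t else u m' β

/-- The partial derivative `∂F/∂u_J^α (n,u)`: the derivative of `F(n,u)` with
respect to the value `u^α(n+J)`. -/
noncomputable def pd {p q : ℕ} (F : DFun p q) (J : Idx p) (α : Fin q) : DFun p q :=
  fun n u => deriv (fun t => F n (upd u (n + J) α t)) (u (n + J) α)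

/-- The shift operator `S_K`. -/
def Sh {p q : ℕ} (K : Idx p) (F : DFun p q) : DFun p q := fun n u => F (n + K) u

/-- `F` is a difference function with stencil `S`: `F(n,u)` depends on `u` only
through the finitely many values `u(n+J)`, `J ∈ S`, smoothly in those values. -/
def IsDiffFun {p q : ℕ} (F : DFun p q) (S : Finset (Idx p)) : Prop :=
  ∃ G : Idx p → (({J // J ∈ S} → Fin q → ℝ) → ℝ),
    (∀ n, ContDiff ℝ (⊤ : ℕ∞) (G n)) ∧ ∀ n u, F n u = G n fun J α => u (n + J.1) α

/-- The prolonged vector field of a characteristic `Q`, acting on a difference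
function `F` with stencil `S`:
`(pr v F)(n,u) = Σ_α Σ_{J ∈ S} (S_J Q^α)(n,u) ⬝ ∂F/∂u_J^α(n,u)`. -/
noncomputable def prv {p q : ℕ} (Q : Fin q → DFun p q) (S : Finset (Idx p))
    (F : DFun p q) : DFun p q :=
  fun n u => ∑ α : Fin q, ∑ J ∈ S, Q α (n + J) u * pd F J α n u

/-- The difference divergence of a `p`-tuple of difference functions. -/
noncomputable def DDiv {p q : ℕ} (P : Fin p → DFun p q) : DFun p q :=
  fun n u => ∑ i : Fin p, (P i (n + Pi.single i (1 : ℤ)) u - P i n u)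

/-- The Euler–Lagrange expression `E_α(F)(n,u) = Σ_{J ∈ S} (∂F/∂u_J^α)(n−J,u)`
of a difference function `F` with stencil `S`. -/
noncomputable def EL {p q : ℕ} (S : Finset (Idx p)) (F : DFun p q) (α : Fin q) : DFun p q :=
  fun n u => ∑ J ∈ S, pd F J α (n - J) u

/-- The higher Euler operator
`E_{u_J^α}(L)(n,u) = Σ_{J0 ≥ 0} (∂L/∂u_{J0+J}^α)(n−J0,u)` for a difference
function `L` depending only on forward values, with stencil `S`
(reindexed by `K = J0 + J`; terms with `K ∉ S` vanish). -/
noncomputable def hEuler {p q : ℕ} (S : Finset (Idx p)) (L : DFun p q) (J : Idx p)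
    (α : Fin q) : DFun p q :=
  fun n u => ∑ K ∈ S.filter (fun K => J ≤ K), pd L K α (n - (K - J)) u

/-- `T^i(L)(n,u) = Σ_α Σ_{J ≥ 1_i} (S_{J−1_i} Q^α)(n,u) ⬝ E_{u_J^α}(L)(n−1_i,u)`
(a finite sum: only `J` with `1_i ≤ J ≤ K` for some stencil point `K` contribute). -/
noncomputable def TT {p q : ℕ} (Q : Fin q → DFun p q) (S : Finset (Idx p)) (i : Fin p)
    (L : DFun p q) : DFun p q :=
  fun n u => ∑ α : Fin q, ∑ J ∈ S.biUnion (fun K => Finset.Icc (Pi.single i (1 : ℤ)) K),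
    Q α (n + J - Pi.single i (1 : ℤ)) u * hEuler S L J α (n - Pi.single i (1 : ℤ)) u


/-- Partial derivative of a functional at the site `m`, component `α`. -/
noncomputable def DD {p q : ℕ} (f : Fld p q → ℝ) (m : Idx p) (α : Fin q) : Fld p q → ℝ :=
  fun u => deriv (fun t => f (upd u m α t)) (u m α)

/-- Functionals depending smoothly on finitely many field values. -/
def Sm {p q : ℕ} (f : Fld p q → ℝ) : Prop :=
  ∃ (ι : Type) (_ : Fintype ι) (s : ι → Idx p × Fin q) (G : (ι → ℝ) → ℝ),
    ContDiff ℝ (⊤ : ℕ∞) G ∧ ∀ u, f u = G fun j => u (s j).1 (s j).2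

/-- The direction vector of the coordinate `(m, α)`. -/
noncomputable def dirv {p q : ℕ} {ι : Type} (s : ι → Idx p × Fin q) (m : Idx p) (α : Fin q) :
    ι → ℝ := fun j => if (s j).1 = m ∧ (s j).2 = α then 1 else 0

theorem upd_self {p q : ℕ} (u : Fld p q) (m : Idx p) (α : Fin q) : upd u m α (u m α) = u := by
  funext m' β
  unfold upd
  split_ifs with h
  · rw [h.1, h.2]
  · rfl

theorem hasDerivAt_rep {p q : ℕ} {ι : Type} [Fintype ι] (s : ι → Idx p × Fin q)
    (G : (ι → ℝ) → ℝ) (hG : ContDiff ℝ (⊤ : ℕ∞) G) (u : Fld p q) (m : Idx p) (α : Fin q) :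
    HasDerivAt (fun t => G fun j => upd u m α t (s j).1 (s j).2)
      (fderiv ℝ G (fun j => u (s j).1 (s j).2) (dirv s m α)) (u m α) := by
  have h1 : HasDerivAt (fun t : ℝ => (fun j => upd u m α t (s j).1 (s j).2 : ι → ℝ))
      (dirv s m α) (u m α) := by
    rw [hasDerivAt_pi]
    intro j
    unfold upd dirv
    split_ifs with h
    · exact hasDerivAt_id _
    · exact hasDerivAt_const _ _
  have h2 : HasFDerivAt G (fderiv ℝ G (fun j => u (s j).1 (s j).2))
      ((fun t : ℝ => (fun j => upd u m α t (s j).1 (s j).2 : ι → ℝ)) (u m α)) := by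
    simp only [upd_self]
    exact (hG.differentiable (by simp) _).hasFDerivAt
  exact h2.comp_hasDerivAt _ h1

theorem Sm.hasDerivAt {p q : ℕ} {f : Fld p q → ℝ} (hf : Sm f) (u : Fld p q) (m : Idx p)
    (α : Fin q) : HasDerivAt (fun t => f (upd u m α t)) (DD f m α u) (u m α) := by
  obtain ⟨ι, _, s, G, hG, h⟩ := hf
  have := hasDerivAt_rep s G hG u m α
  unfold DD
  simp only [h]
  exact this.differentiableAt.hasDerivAt

theorem DD_rep {p q : ℕ} {f : Fld p q → ℝ} {ι : Type} [Fintype ι] (s : ι → Idx p × Fin q)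
    (G : (ι → ℝ) → ℝ) (hG : ContDiff ℝ (⊤ : ℕ∞) G)
    (h : ∀ u, f u = G fun j => u (s j).1 (s j).2) (m : Idx p) (α : Fin q) (u : Fld p q) :
    DD f m α u = (fun x => fderiv ℝ G x (dirv s m α)) (fun j => u (s j).1 (s j).2) := by
  unfold DD
  simp only [h]
  exact (hasDerivAt_rep s G hG u m α).deriv

theorem contDiff_dir {ι : Type} [Fintype ι] {G : (ι → ℝ) → ℝ} (hG : ContDiff ℝ (⊤ : ℕ∞) G)
    (v : ι → ℝ) : ContDiff ℝ (⊤ : ℕ∞) (fun x => fderiv ℝ G x v) :=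
  (hG.fderiv_right (by simp)).clm_apply contDiff_const

theorem Sm.partial_deriv {p q : ℕ} {f : Fld p q → ℝ} (hf : Sm f) (m : Idx p) (α : Fin q) :
    Sm (DD f m α) := by
  obtain ⟨ι, _, s, G, hG, h⟩ := hf
  exact ⟨ι, _, s, _, contDiff_dir hG _, DD_rep s G hG h m α⟩

theorem DD_comm {p q : ℕ} {f : Fld p q → ℝ} (hf : Sm f) (m m' : Idx p) (α β : Fin q) :
    DD (DD f m α) m' β = DD (DD f m' β) m α := by
  obtain ⟨ι, _, s, G, hG, h⟩ := hf
  funext u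
  rw [DD_rep s _ (contDiff_dir hG _) (DD_rep s G hG h m α),
    DD_rep s _ (contDiff_dir hG _) (DD_rep s G hG h m' β)]
  have hd : Differentiable ℝ (fderiv ℝ G) :=
    (hG.fderiv_right (m := (⊤ : ℕ∞)) (by simp)).differentiable (by simp)
  have e : ∀ (v w x : ι → ℝ), fderiv ℝ (fun x => fderiv ℝ G x v) x w
      = fderiv ℝ (fderiv ℝ G) x w v := by
    intro v w x
    rw [fderiv_clm_apply (hd x) (differentiableAt_const v)]
    simp
  simp only [e]
  have hs : IsSymmSndFDerivAt ℝ G (fun j => u (s j).1 (s j).2) :=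
    hG.contDiffAt.isSymmSndFDerivAt (by simpa using WithTop.coe_le_coe.2 (le_top : (2 : ℕ∞) ≤ ⊤))
  exact hs _ _

theorem Sm.comp2 {p q : ℕ} {f g : Fld p q → ℝ} (hf : Sm f) (hg : Sm g) (b : ℝ × ℝ → ℝ)
    (hb : ContDiff ℝ (⊤ : ℕ∞) b) : Sm (fun u => b (f u, g u)) := by
  obtain ⟨ι, _, s, G, hG, h⟩ := hf
  obtain ⟨κ, _, r, H, hH, h'⟩ := hg
  refine ⟨ι ⊕ κ, inferInstance, Sum.elim s r,
    fun x => b (G (fun j => x (Sum.inl j)), H (fun j => x (Sum.inr j))), ?_, ?_⟩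
  · refine hb.comp (ContDiff.prodMk (hG.comp ?_) (hH.comp ?_)) <;> fun_prop
  · intro u
    simp [h, h']

theorem Sm.mul {p q : ℕ} {f g : Fld p q → ℝ} (hf : Sm f) (hg : Sm g) :
    Sm (fun u => f u * g u) := hf.comp2 hg (fun x => x.1 * x.2) (by fun_prop)

theorem Sm.add {p q : ℕ} {f g : Fld p q → ℝ} (hf : Sm f) (hg : Sm g) :
    Sm (fun u => f u + g u) := hf.comp2 hg (fun x => x.1 + x.2) (by fun_prop)

theorem Sm.const {p q : ℕ} (c : ℝ) : Sm (fun _ : Fld p q => c) :=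
  ⟨Empty, inferInstance, fun j => j.elim, fun _ => c, contDiff_const, fun _ => rfl⟩

theorem Sm.sum {p q : ℕ} {κ : Type*} (A : Finset κ) {f : κ → Fld p q → ℝ}
    (hf : ∀ a ∈ A, Sm (f a)) : Sm (fun u => ∑ a ∈ A, f a u) := by
  induction A using Finset.induction_on with
  | empty => simpa using Sm.const 0
  | insert a A ha ih =>
    simp only [Finset.sum_insert ha]
    exact (hf a (by simp)).add (ih fun b hb => hf b (by simp [hb]))

theorem DD_sum {p q : ℕ} {κ : Type*} (A : Finset κ) {f : κ → Fld p q → ℝ}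
    (hf : ∀ a ∈ A, Sm (f a)) (m : Idx p) (α : Fin q) (u : Fld p q) :
    DD (fun u => ∑ a ∈ A, f a u) m α u = ∑ a ∈ A, DD (f a) m α u :=
  (HasDerivAt.fun_sum fun a ha => (hf a ha).hasDerivAt u m α).deriv

theorem DD_sub {p q : ℕ} {f g : Fld p q → ℝ} (hf : Sm f) (hg : Sm g)
    (m : Idx p) (α : Fin q) (u : Fld p q) :
    DD (fun u => f u - g u) m α u = DD f m α u - DD g m α u :=
  ((hf.hasDerivAt u m α).fun_sub (hg.hasDerivAt u m α)).deriv

theorem DD_mul {p q : ℕ} {f g : Fld p q → ℝ} (hf : Sm f) (hg : Sm g)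
    (m : Idx p) (α : Fin q) (u : Fld p q) :
    DD (fun u => f u * g u) m α u = DD f m α u * g u + f u * DD g m α u := by
  have := ((hf.hasDerivAt u m α).fun_mul (hg.hasDerivAt u m α)).deriv
  rw [upd_self] at this
  exact this

/-- The part of the vector field at the site `m`. -/
noncomputable def VV {p q : ℕ} (Q : Fin q → DFun p q) (m : Idx p) (f : Fld p q → ℝ) :
    Fld p q → ℝ := fun u => ∑ α : Fin q, Q α m u * DD f m α u

theorem IsDiffFun.sm {p q : ℕ} {F : DFun p q} {S : Finset (Idx p)} (h : IsDiffFun F S)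
    (n : Idx p) : Sm (F n) := by
  obtain ⟨G, hG, h⟩ := h
  refine ⟨{J // J ∈ S} × Fin q, inferInstance, fun x => (n + x.1.1, x.2),
    fun x => G n (fun J α => x (J, α)), ?_, ?_⟩
  · refine (hG n).comp ?_
    fun_prop
  · intro u
    rw [h]

theorem IsDiffFun.DD_zero {p q : ℕ} {F : DFun p q} {S : Finset (Idx p)} (h : IsDiffFun F S)
    (n m : Idx p) (hm : ∀ J ∈ S, m ≠ n + J) (α : Fin q) (u : Fld p q) : DD (F n) m α u = 0 := by
  obtain ⟨G, hG, h⟩ := h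
  unfold DD
  have : (fun t => F n (upd u m α t)) = fun _ => F n u := by
    funext t
    rw [h, h]
    congr 1
    funext J β
    unfold upd
    rw [if_neg]
    exact fun hh => hm J.1 J.2 hh.1.symm
  rw [this, deriv_const]

theorem IsDiffFun.VV_zero {p q : ℕ} (Q : Fin q → DFun p q)
    {F : DFun p q} {S : Finset (Idx p)} (h : IsDiffFun F S)
    (n m : Idx p) (hm : ∀ J ∈ S, m ≠ n + J) : VV Q m (F n) = fun _ => 0 := by
  funext u
  unfold VV
  exact Finset.sum_eq_zero fun α _ => by rw [h.DD_zero n m hm, mul_zero]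

theorem Sm.site {p q : ℕ} {Q : Fin q → DFun p q} (hQ : ∀ α m, Sm (Q α m)) {f : Fld p q → ℝ}
    (hf : Sm f) (m : Idx p) : Sm (VV Q m f) :=
  Sm.sum _ fun α _ => (hQ α m).mul (hf.partial_deriv m α)

theorem VV_sum {p q : ℕ} (Q : Fin q → DFun p q) {κ : Type*} (A : Finset κ)
    {f : κ → Fld p q → ℝ} (hf : ∀ a ∈ A, Sm (f a)) (m : Idx p) (u : Fld p q) :
    VV Q m (fun u => ∑ a ∈ A, f a u) u = ∑ a ∈ A, VV Q m (f a) u := by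
  unfold VV
  simp only [DD_sum A hf, Finset.mul_sum]
  exact Finset.sum_comm

theorem VV_sub {p q : ℕ} (Q : Fin q → DFun p q) {f g : Fld p q → ℝ} (hf : Sm f) (hg : Sm g)
    (m : Idx p) (u : Fld p q) :
    VV Q m (fun u => f u - g u) u = VV Q m f u - VV Q m g u := by
  unfold VV
  simp only [DD_sub hf hg, mul_sub, Finset.sum_sub_distrib]

theorem VV_zero {p q : ℕ} (Q : Fin q → DFun p q) (m : Idx p) :
    VV Q m (fun _ => 0) = fun _ => 0 := by
  funext u
  simp [VV, DD]

theorem VV_comm {p q : ℕ} {Q : Fin q → DFun p q}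
    (hQ : ∀ α, IsDiffFun (Q α) ({(0 : Idx p)} : Finset (Idx p))) {f : Fld p q → ℝ}
    (hf : Sm f) (m m' : Idx p) : VV Q m (VV Q m' f) = VV Q m' (VV Q m f) := by
  by_cases hm : m = m'
  · rw [hm]
  have key : ∀ k k' : Idx p, k ≠ k' → ∀ u, VV Q k (VV Q k' f) u
      = ∑ α, ∑ β, Q α k u * (Q β k' u * DD (DD f k' β) k α u) := by
    intro k k' hk u
    show ∑ α, Q α k u * DD (fun u => ∑ β, Q β k' u * DD f k' β u) k α u = _
    refine Finset.sum_congr rfl fun α _ => ?_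
    rw [DD_sum _ (fun β _ => ((hQ β).sm k').mul (hf.partial_deriv k' β)), Finset.mul_sum]
    refine Finset.sum_congr rfl fun β _ => ?_
    rw [DD_mul ((hQ β).sm k') (hf.partial_deriv k' β), (hQ β).DD_zero k' k (by simpa using hk)]
    ring
  funext u
  rw [key m m' hm, key m' m (Ne.symm hm), Finset.sum_comm]
  refine Finset.sum_congr rfl fun β _ => Finset.sum_congr rfl fun α _ => ?_
  rw [DD_comm hf]
  ring

/-- The full vector field. -/
noncomputable def PV {p q : ℕ} (Q : Fin q → DFun p q) (f : Fld p q → ℝ) : Fld p q → ℝ :=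
  fun u => ∑ᶠ m, VV Q m f u

theorem Sm.supp {p q : ℕ} (Q : Fin q → DFun p q) {f : Fld p q → ℝ} (hf : Sm f) :
    ∃ A : Finset (Idx p), ∀ m, m ∉ A → VV Q m f = fun _ => 0 := by
  obtain ⟨ι, _, s, G, hG, h⟩ := hf
  refine ⟨Finset.univ.image (fun j => (s j).1), fun m hm => ?_⟩
  funext u
  refine Finset.sum_eq_zero fun α _ => ?_
  rw [DD_rep s G hG h]
  have : dirv s m α = 0 := by
    funext j
    unfold dirv
    rw [if_neg]
    · rfl
    · rintro ⟨hj, -⟩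
      exact hm (Finset.mem_image.2 ⟨j, Finset.mem_univ _, hj⟩)
  simp [this]

theorem PV_eq {p q : ℕ} (Q : Fin q → DFun p q) {f : Fld p q → ℝ} (A : Finset (Idx p))
    (hA : ∀ m, m ∉ A → VV Q m f = fun _ => 0) (u : Fld p q) :
    PV Q f u = ∑ m ∈ A, VV Q m f u := by
  refine finsum_eq_sum_of_support_subset _ fun m hm => ?_
  by_contra h
  exact hm (congrFun (hA m h) u)

theorem Sm.fin {p q : ℕ} (Q : Fin q → DFun p q) {f : Fld p q → ℝ} (hf : Sm f) (u : Fld p q) :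
    (Function.support fun m => VV Q m f u).Finite := by
  obtain ⟨A, hA⟩ := hf.supp Q
  refine A.finite_toSet.subset fun m hm => ?_
  by_contra h
  exact hm (congrFun (hA m h) u)

theorem PV_sub {p q : ℕ} (Q : Fin q → DFun p q) {f g : Fld p q → ℝ} (hf : Sm f) (hg : Sm g)
    (u : Fld p q) : PV Q (fun u => f u - g u) u = PV Q f u - PV Q g u := by
  unfold PV
  simp only [VV_sub Q hf hg]
  exact finsum_sub_distrib (hf.fin Q u) (hg.fin Q u)

theorem PV_sum {p q : ℕ} (Q : Fin q → DFun p q) {κ : Type*} (A : Finset κ)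
    {f : κ → Fld p q → ℝ} (hf : ∀ a ∈ A, Sm (f a)) (u : Fld p q) :
    PV Q (fun u => ∑ a ∈ A, f a u) u = ∑ a ∈ A, PV Q (f a) u := by
  unfold PV
  simp only [VV_sum Q A hf]
  exact finsum_sum_comm A _ fun a ha => (hf a ha).fin Q u

theorem PV_VV {p q : ℕ} {Q : Fin q → DFun p q}
    (hQ : ∀ α, IsDiffFun (Q α) ({(0 : Idx p)} : Finset (Idx p))) {f : Fld p q → ℝ}
    (hf : Sm f) (m : Idx p) : PV Q (VV Q m f) = VV Q m (PV Q f) := by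
  have hQ' : ∀ α m, Sm (Q α m) := fun α m => (hQ α).sm m
  obtain ⟨A, hA⟩ := hf.supp Q
  funext u
  rw [PV_eq Q A, funext (PV_eq Q A hA), VV_sum Q A fun m' _ => Sm.site hQ' hf m']
  · refine Finset.sum_congr rfl fun m' _ => ?_
    rw [VV_comm hQ hf]
  · intro m' hm'
    rw [VV_comm hQ hf, hA m' hm', VV_zero]

theorem prv_eq {p q : ℕ} (Q : Fin q → DFun p q) {F : DFun p q} {S : Finset (Idx p)}
    (h : IsDiffFun F S) (n : Idx p) (u : Fld p q) : prv Q S F n u = PV Q (F n) u := by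
  rw [PV_eq Q (S.image (fun J => n + J))]
  · rw [Finset.sum_image (fun a _ b _ hab => add_left_cancel hab)]
    unfold prv
    rw [Finset.sum_comm]
    rfl
  · intro m hm
    refine h.VV_zero Q n m fun J hJ hh => hm (Finset.mem_image.2 ⟨J, hJ, hh.symm⟩)

theorem TT_eq {p q : ℕ} (Q : Fin q → DFun p q) (S : Finset (Idx p)) (i : Fin p)
    (F : DFun p q) (n : Idx p) (u : Fld p q) :
    TT Q S i F n u = ∑ K ∈ S, ∑ J ∈ Finset.Icc (Pi.single i (1 : ℤ)) K,
      VV Q ((n - Pi.single i (1 : ℤ) - (K - J)) + K)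
        (F (n - Pi.single i (1 : ℤ) - (K - J))) u := by
  unfold TT hEuler
  rw [Finset.sum_comm]
  have h1 : ∀ J ∈ S.biUnion (fun K => Finset.Icc (Pi.single i (1 : ℤ)) K),
      (∑ α : Fin q, Q α (n + J - Pi.single i (1 : ℤ)) u *
        ∑ K ∈ S.filter (fun K => J ≤ K), pd F K α (n - Pi.single i (1 : ℤ) - (K - J)) u)
      = ∑ K ∈ S.filter (fun K => J ≤ K), VV Q ((n - Pi.single i (1 : ℤ) - (K - J)) + K)
        (F (n - Pi.single i (1 : ℤ) - (K - J))) u := by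
    intro J _
    simp only [Finset.mul_sum]
    rw [Finset.sum_comm]
    refine Finset.sum_congr rfl fun K _ => Finset.sum_congr rfl fun α _ => ?_
    have e : n + J - Pi.single i (1 : ℤ) = n - Pi.single i (1 : ℤ) - (K - J) + K := by abel
    rw [e]
    rfl
  rw [Finset.sum_congr rfl h1]
  refine Finset.sum_comm' fun J K => ?_
  simp only [Finset.mem_biUnion, Finset.mem_filter, Finset.mem_Icc]
  constructor
  · rintro ⟨⟨K', _, h, _⟩, h2, h3⟩
    exact ⟨⟨h, h3⟩, h2⟩
  · rintro ⟨⟨h, h3⟩, h2⟩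
    exact ⟨⟨K, h2, h, h3⟩, h2, h3⟩

/-- Let `Q` be a Lie point characteristic generating
divergence variational symmetries of the difference Lagrangian `L`, i.e.
`pr v(L) = Div R` identically for some `p`-tuple `R` of difference functions
depending only on forward values.  Then for the Noether conservation law
components `P^i = T^i(L) − R^i` one has, for every `i` and all `n`, `u`:
`(pr v(P^i))(n,u) = (T^i(Div R))(n,u) − (pr v(R^i))(n,u)`. -/
theorem stmt_10 {p q : ℕ} (hp : 1 ≤ p) (hq : 1 ≤ q)
    (Q : Fin q → DFun p q)
    (hQ : ∀ α, IsDiffFun (Q α) ({(0 : Idx p)} : Finset (Idx p)))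
    (L : DFun p q) (S : Finset (Idx p)) (hL : IsDiffFun L S)
    (hS : ∀ K ∈ S, (0 : Idx p) ≤ K)
    (R : Fin p → DFun p q) (SR : Fin p → Finset (Idx p))
    (hR : ∀ i, IsDiffFun (R i) (SR i))
    (hSR : ∀ i, ∀ K ∈ SR i, (0 : Idx p) ≤ K)
    (hsym : ∀ (n : Idx p) (u : Fld p q), prv Q S L n u = DDiv R n u)
    (SD : Finset (Idx p)) (hSD : IsDiffFun (DDiv R) SD)
    (SP : Fin p → Finset (Idx p))
    (hSP : ∀ i, IsDiffFun (fun n' u' => TT Q S i L n' u' - R i n' u') (SP i)) :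
    ∀ (i : Fin p) (n : Idx p) (u : Fld p q),
      prv Q (SP i) (fun n' u' => TT Q S i L n' u' - R i n' u') n u
        = TT Q SD i (DDiv R) n u - prv Q (SR i) (R i) n u := by
  intro i n u
  have hQ' : ∀ α m, Sm (Q α m) := fun α m => (hQ α).sm m
  have hLD : ∀ k, PV Q (L k) = DDiv R k := by
    intro k
    funext w
    rw [← prv_eq Q hL, hsym]
  rw [prv_eq Q (hSP i), prv_eq Q (hR i)]
  have hV : ∀ K J : Idx p, Sm (VV Q ((n - Pi.single i (1 : ℤ) - (K - J)) + K)
        (L (n - Pi.single i (1 : ℤ) - (K - J)))) := fun K J => Sm.site hQ' (hL.sm _) _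
  have hT : TT Q S i L n = fun w => ∑ K ∈ S, ∑ J ∈ Finset.Icc (Pi.single i (1 : ℤ)) K,
      VV Q ((n - Pi.single i (1 : ℤ) - (K - J)) + K)
        (L (n - Pi.single i (1 : ℤ) - (K - J))) w := funext fun w => TT_eq Q S i L n w
  have hTs : Sm (TT Q S i L n) := by
    rw [hT]
    exact Sm.sum _ fun K _ => Sm.sum _ fun J _ => hV K J
  rw [PV_sub Q hTs ((hR i).sm n), hT,
    PV_sum Q S (fun K _ => Sm.sum _ fun J _ => hV K J)]
  congr 1
  rw [TT_eq]
  have h1 : ∀ K, PV Q (fun w => ∑ J ∈ Finset.Icc (Pi.single i (1 : ℤ)) K,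
      VV Q ((n - Pi.single i (1 : ℤ) - (K - J)) + K)
        (L (n - Pi.single i (1 : ℤ) - (K - J))) w) u
      = ∑ J ∈ Finset.Icc (Pi.single i (1 : ℤ)) K,
      VV Q ((n - Pi.single i (1 : ℤ) - (K - J)) + K)
        (DDiv R (n - Pi.single i (1 : ℤ) - (K - J))) u := by
    intro K
    rw [PV_sum Q _ (fun J _ => hV K J)]
    refine Finset.sum_congr rfl fun J _ => ?_
    rw [PV_VV hQ (hL.sm _), hLD]
  simp only [h1]
  have hS0 : ∀ k K, K ∉ S → VV Q (k + K) (DDiv R k) u = 0 := by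
    intro k K hK
    rw [← hLD, ← PV_VV hQ (hL.sm _), hL.VV_zero Q k (k + K)
      (fun J hJ h => hK (by rw [add_left_cancel h]; exact hJ))]
    simp [PV, VV_zero]
  have hD0 : ∀ k K, K ∉ SD → VV Q (k + K) (DDiv R k) u = 0 := by
    intro k K hK
    rw [hSD.VV_zero Q k (k + K)
      (fun J hJ h => hK (by rw [add_left_cancel h]; exact hJ))]
  rw [Finset.sum_subset (Finset.subset_union_left (s₁ := S) (s₂ := SD))
      (fun K _ hK => Finset.sum_eq_zero fun J _ => hS0 _ K hK),
    Finset.sum_subset (Finset.subset_union_right (s₁ := S) (s₂ := SD))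
      (fun K _ hK => Finset.sum_eq_zero fun J _ => hD0 _ K hK)]
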